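/- Fix real numbers λ > 0, a and E, and for each ε > 0 define Denom(ε) = a²(λε − 1)² + 4λ² + a⁴ε², A(ε) = E(a(λε − 1) − a³ε²)/Denom(ε), and B(ε) = Eλ(a²ε² + 2)/Denom(ε). Then there exists a constant K ≥ 0 such that for every ε ∈ (0, 1] and every t ∈ ℝ, | (A(ε) + aE/(a² + 4λ²)) · cos(at) + (B(ε) − 2λE/(a² + 4λ²)) · sin(at) | ≤ K · ε. In other words, the pointwise error between the periodic invariant parts of the slow mean of the microscopic model and of the approximate macroscopic model decreases (at least) linearly in the small-scale parameter ε, uniformly in time; in particular A(ε) → −aE/(a² + 4λ²) and B(ε) → 2λE/(a² + 4λ²) as ε → 0⁺. -/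

import Mathlib

open Real Filter Topology

/-!
Write a periodic mean `A cos(at) + B sin(at)` as `Im (Z exp(iat))` with `Z = B + iA`.
Solving the mean equations for `Z` gives `Z(ε) = E (1 + iaε) / D(ε)` with
`D(ε) = (ia + λ)(1 + iaε) + λ` for the microscopic model and `Z̄ = E / (2λ + ia)` for the
macroscopic one. The difference collapses to `Z(ε) - Z̄ = iEaλε / (D(ε) (2λ + ia))`, and since
`‖D(ε)‖ ≥ 2|λ|` and `‖2λ + ia‖ ≥ |a|`, its norm is at most `|E||ε|/2`.
-/

theorem abs_im_mul_cos_add_re_mul_sin_le_norm (z : ℂ) (θ : ℝ) :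
    |z.im * cos θ + z.re * sin θ| ≤ ‖z‖ := by
  have him : (z * Complex.exp (θ * Complex.I)).im = z.im * cos θ + z.re * sin θ := by
    rw [Complex.mul_im, Complex.exp_ofReal_mul_I_re, Complex.exp_ofReal_mul_I_im, add_comm]
  calc |z.im * cos θ + z.re * sin θ|
      = |(z * Complex.exp (θ * Complex.I)).im| := by rw [him]
    _ ≤ ‖z * Complex.exp (θ * Complex.I)‖ := Complex.abs_im_le_norm _
    _ = ‖z‖ := by rw [norm_mul, Complex.norm_exp_ofReal_mul_I, mul_one]

/-- The denominator of the transfer function of the slow-fast system at frequency `a`: the value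
at `s = ia` of `(s + λ)(1 + sε) + λ`, which is `ε` times the characteristic polynomial. -/
noncomputable def slowFastDenom (lam a ε : ℝ) : ℂ :=
  (a * Complex.I + lam) * (1 + a * ε * Complex.I) + lam

/-- The complex amplitude of the periodic slow mean of the slow-fast system: the `Z` for which
`x = Im (Z exp(iat))` solves `x' = -λ(x + y) + E sin(at)`, `ε y' = x - y`. -/
noncomputable def slowFastAmplitude (lam a E ε : ℝ) : ℂ :=
  E * (1 + a * ε * Complex.I) / slowFastDenom lam a ε

/-- The complex amplitude of the periodic mean of the macroscopic model: the `Z` for which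
`x = Im (Z exp(iat))` solves `x' = -2λx + E sin(at)`. -/
noncomputable def macroAmplitude (lam a E : ℝ) : ℂ :=
  E / (2 * lam + a * Complex.I)

section Amplitudes

variable (lam a E ε : ℝ)

theorem slowFastDenom_re : (slowFastDenom lam a ε).re = 2 * lam - a ^ 2 * ε := by
  simp only [slowFastDenom, Complex.add_re, Complex.add_im, Complex.mul_re, Complex.mul_im,
    Complex.ofReal_re, Complex.ofReal_im, Complex.one_re, Complex.one_im, Complex.I_re,
    Complex.I_im]
  ring

theorem slowFastDenom_im : (slowFastDenom lam a ε).im = a * (1 + lam * ε) := by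
  simp only [slowFastDenom, Complex.add_re, Complex.add_im, Complex.mul_re, Complex.mul_im,
    Complex.ofReal_re, Complex.ofReal_im, Complex.one_re, Complex.one_im, Complex.I_re,
    Complex.I_im]
  ring

theorem normSq_slowFastDenom :
    Complex.normSq (slowFastDenom lam a ε) =
      a ^ 2 * (lam * ε - 1) ^ 2 + 4 * lam ^ 2 + a ^ 4 * ε ^ 2 := by
  rw [Complex.normSq_apply, slowFastDenom_re, slowFastDenom_im]
  ring

theorem two_mul_abs_le_norm_slowFastDenom : 2 * |lam| ≤ ‖slowFastDenom lam a ε‖ := by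
  refine (pow_le_pow_iff_left₀ (by positivity) (norm_nonneg _) two_ne_zero).1 ?_
  calc (2 * |lam|) ^ 2 = 4 * lam ^ 2 := by rw [mul_pow, sq_abs]; norm_num
    _ ≤ a ^ 2 * (lam * ε - 1) ^ 2 + 4 * lam ^ 2 + a ^ 4 * ε ^ 2 := by
        have hquadratic : 0 ≤ a ^ 2 * (lam * ε - 1) ^ 2 := by positivity
        have hquartic : 0 ≤ a ^ 4 * ε ^ 2 := by positivity
        linarith
    _ = ‖slowFastDenom lam a ε‖ ^ 2 := by
        rw [← normSq_slowFastDenom, Complex.normSq_eq_norm_sq]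

theorem slowFastAmplitude_re :
    (slowFastAmplitude lam a E ε).re = E * lam * (a ^ 2 * ε ^ 2 + 2) /
      (a ^ 2 * (lam * ε - 1) ^ 2 + 4 * lam ^ 2 + a ^ 4 * ε ^ 2) := by
  rw [slowFastAmplitude, Complex.div_re, normSq_slowFastDenom, slowFastDenom_re,
    slowFastDenom_im, ← add_div]
  simp only [Complex.add_re, Complex.add_im, Complex.mul_re, Complex.mul_im,
    Complex.ofReal_re, Complex.ofReal_im, Complex.one_re, Complex.one_im, Complex.I_re,
    Complex.I_im]
  ring

theorem slowFastAmplitude_im :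
    (slowFastAmplitude lam a E ε).im = E * (a * (lam * ε - 1) - a ^ 3 * ε ^ 2) /
      (a ^ 2 * (lam * ε - 1) ^ 2 + 4 * lam ^ 2 + a ^ 4 * ε ^ 2) := by
  rw [slowFastAmplitude, Complex.div_im, normSq_slowFastDenom, slowFastDenom_re,
    slowFastDenom_im, ← sub_div]
  simp only [Complex.add_re, Complex.add_im, Complex.mul_re, Complex.mul_im,
    Complex.ofReal_re, Complex.ofReal_im, Complex.one_re, Complex.one_im, Complex.I_re,
    Complex.I_im]
  ring

theorem slowFastDenom_zero : slowFastDenom lam a 0 = 2 * lam + a * Complex.I := by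
  rw [slowFastDenom, Complex.ofReal_zero]
  ring

theorem slowFastAmplitude_zero : slowFastAmplitude lam a E 0 = macroAmplitude lam a E := by
  simp [slowFastAmplitude, macroAmplitude, slowFastDenom_zero]

theorem macroAmplitude_re : (macroAmplitude lam a E).re = 2 * lam * E / (a ^ 2 + 4 * lam ^ 2) := by
  rw [← slowFastAmplitude_zero, slowFastAmplitude_re]
  ring

theorem macroAmplitude_im : (macroAmplitude lam a E).im = -(a * E / (a ^ 2 + 4 * lam ^ 2)) := by
  rw [← slowFastAmplitude_zero, slowFastAmplitude_im]
  ring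

variable {lam a}

theorem slowFastDenom_ne_zero (h : lam ≠ 0 ∨ a ≠ 0) : slowFastDenom lam a ε ≠ 0 := by
  rw [← Complex.normSq_pos, normSq_slowFastDenom]
  rcases eq_or_ne lam 0 with rfl | hlam
  · have ha : a ≠ 0 := h.resolve_left (not_not_intro rfl)
    simp only [zero_mul]
    positivity
  · positivity

theorem two_mul_add_mul_I_ne_zero (h : lam ≠ 0 ∨ a ≠ 0) :
    (2 * lam + a * Complex.I : ℂ) ≠ 0 :=
  slowFastDenom_zero lam a ▸ slowFastDenom_ne_zero 0 h

theorem slowFastAmplitude_sub_macroAmplitude (h : lam ≠ 0 ∨ a ≠ 0) :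
    slowFastAmplitude lam a E ε - macroAmplitude lam a E =
      E * a * lam * ε * Complex.I /
        (slowFastDenom lam a ε * (2 * lam + a * Complex.I)) := by
  rw [slowFastAmplitude, macroAmplitude,
    div_sub_div _ _ (slowFastDenom_ne_zero ε h) (two_mul_add_mul_I_ne_zero h), slowFastDenom]
  ring

theorem norm_slowFastAmplitude_sub_macroAmplitude_le (h : lam ≠ 0 ∨ a ≠ 0) :
    ‖slowFastAmplitude lam a E ε - macroAmplitude lam a E‖ ≤ |E| / 2 * |ε| := by
  have hD : 0 < ‖slowFastDenom lam a ε‖ := norm_pos_iff.2 (slowFastDenom_ne_zero ε h)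
  have hM : 0 < ‖(2 * lam + a * Complex.I : ℂ)‖ := norm_pos_iff.2 (two_mul_add_mul_I_ne_zero h)
  have ha : |a| ≤ ‖(2 * lam + a * Complex.I : ℂ)‖ := by
    simpa using Complex.abs_im_le_norm (2 * lam + a * Complex.I)
  rw [slowFastAmplitude_sub_macroAmplitude E ε h, norm_div, norm_mul (slowFastDenom lam a ε),
    div_le_iff₀ (mul_pos hD hM)]
  calc ‖(E * a * lam * ε * Complex.I : ℂ)‖
      = |E| / 2 * |ε| * (2 * |lam| * |a|) := by
        simp only [norm_mul, Complex.norm_real, Complex.norm_I, norm_eq_abs]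
        ring
    _ ≤ |E| / 2 * |ε| * (‖slowFastDenom lam a ε‖ * ‖(2 * lam + a * Complex.I : ℂ)‖) := by
        gcongr
        exact two_mul_abs_le_norm_slowFastDenom lam a ε

theorem tendsto_slowFastAmplitude (h : lam ≠ 0 ∨ a ≠ 0) :
    Tendsto (slowFastAmplitude lam a E) (𝓝 0) (𝓝 (macroAmplitude lam a E)) := by
  have hbound : Tendsto (fun ε : ℝ => |E| / 2 * |ε|) (𝓝 0) (𝓝 0) :=
    Continuous.tendsto' (by fun_prop) 0 0 (by simp)
  rw [tendsto_iff_norm_sub_tendsto_zero]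
  exact squeeze_zero (fun _ => norm_nonneg _)
    (fun ε => norm_slowFastAmplitude_sub_macroAmplitude_le E ε h) hbound

end Amplitudes

theorem modeling_error_linear_in_epsilon_general
    (lam a E : ℝ) (h : lam ≠ 0 ∨ a ≠ 0)
    (Denom A B : ℝ → ℝ)
    (hDenom : ∀ ε, Denom ε = a ^ 2 * (lam * ε - 1) ^ 2 + 4 * lam ^ 2 + a ^ 4 * ε ^ 2)
    (hA : ∀ ε, A ε = E * (a * (lam * ε - 1) - a ^ 3 * ε ^ 2) / Denom ε)
    (hB : ∀ ε, B ε = E * lam * (a ^ 2 * ε ^ 2 + 2) / Denom ε) :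
    (∀ ε t : ℝ,
      |(A ε + a * E / (a ^ 2 + 4 * lam ^ 2)) * cos (a * t)
        + (B ε - 2 * lam * E / (a ^ 2 + 4 * lam ^ 2)) * sin (a * t)| ≤ |E| / 2 * |ε|) ∧
    Tendsto A (𝓝 0) (𝓝 (-(a * E / (a ^ 2 + 4 * lam ^ 2)))) ∧
    Tendsto B (𝓝 0) (𝓝 (2 * lam * E / (a ^ 2 + 4 * lam ^ 2))) := by
  have hA_im : A = fun ε => (slowFastAmplitude lam a E ε).im := by
    funext ε
    rw [hA, hDenom, slowFastAmplitude_im]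
  have hB_re : B = fun ε => (slowFastAmplitude lam a E ε).re := by
    funext ε
    rw [hB, hDenom, slowFastAmplitude_re]
  have hlim := tendsto_slowFastAmplitude E h
  simp only [← sub_neg_eq_add (_ : ℝ) (a * E / _), ← macroAmplitude_im, ← macroAmplitude_re,
    hA_im, hB_re]
  refine ⟨fun ε t => ?_, (Complex.continuous_im.tendsto _).comp hlim,
    (Complex.continuous_re.tendsto _).comp hlim⟩
  rw [← Complex.sub_im, ← Complex.sub_re]
  exact (abs_im_mul_cos_add_re_mul_sin_le_norm _ _).trans
    (norm_slowFastAmplitude_sub_macroAmplitude_le E ε h)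

/-- The pointwise error between the periodic invariant parts of the slow mean of the
microscopic model and of the approximate macroscopic model decreases (at least) linearly
in the small-scale parameter `ε`, uniformly in time; in particular
`A(ε) → −aE/(a² + 4λ²)` and `B(ε) → 2λE/(a² + 4λ²)` as `ε → 0⁺`. -/
theorem modeling_error_linear_in_epsilon
    (lam a E : ℝ) (hlam : 0 < lam)
    (Denom A B : ℝ → ℝ)
    (hDenom : ∀ ε, Denom ε = a ^ 2 * (lam * ε - 1) ^ 2 + 4 * lam ^ 2 + a ^ 4 * ε ^ 2)
    (hA : ∀ ε, A ε = E * (a * (lam * ε - 1) - a ^ 3 * ε ^ 2) / Denom ε)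
    (hB : ∀ ε, B ε = E * lam * (a ^ 2 * ε ^ 2 + 2) / Denom ε) :
    (∃ K : ℝ, 0 ≤ K ∧ ∀ ε ∈ Set.Ioc (0 : ℝ) 1, ∀ t : ℝ,
      |(A ε + a * E / (a ^ 2 + 4 * lam ^ 2)) * Real.cos (a * t)
        + (B ε - 2 * lam * E / (a ^ 2 + 4 * lam ^ 2)) * Real.sin (a * t)| ≤ K * ε) ∧
    Tendsto A (𝓝[>] 0) (𝓝 (-(a * E / (a ^ 2 + 4 * lam ^ 2)))) ∧
    Tendsto B (𝓝[>] 0) (𝓝 (2 * lam * E / (a ^ 2 + 4 * lam ^ 2))) := by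
  obtain ⟨herror, hA_lim, hB_lim⟩ :=
    modeling_error_linear_in_epsilon_general lam a E (.inl hlam.ne') Denom A B hDenom hA hB
  exact ⟨⟨|E| / 2, by positivity, fun ε hε t => (herror ε t).trans_eq (by rw [abs_of_pos hε.1])⟩,
    hA_lim.mono_left nhdsWithin_le_nhds, hB_lim.mono_left nhdsWithin_le_nhds⟩
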